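/- arXiv:1509.09160 — 10 statements merged into one kernel-verified Lean document; each statement's English description precedes it below -/
import Mathlib

section
/- For every natural number k and every natural number s with 0 ≤ s ≤ k, define K(k,s) = (1/(k+1)) · Σ_{n=0}^{k} C(k+1,n) · B*_n · Σ_{j=0}^{n} (−1)^j · C(n,j) · N(k,n,j,s), where N(k,n,j,s) ∈ {0,1} is the number of integers ℓ with 0 ≤ ℓ ≤ k−n and ℓ + j = s. Then K(k,0) = 1, and K(k,s) = 0 for every s with 1 ≤ s ≤ k. -/
/-- `K k s` from the Gutt star product computation:
`K(k,s) = (1/(k+1)) · Σ_{n=0}^{k} C(k+1,n) · B*_n · Σ_{j=0}^{n} (−1)^j · C(n,j) · N(k,n,j,s)`,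
where `N(k,n,j,s)` is the number of `ℓ` with `0 ≤ ℓ ≤ k−n` and `ℓ + j = s`. -/
def guttK (k s : ℕ) : ℚ :=
  (1 / (k + 1 : ℚ)) * ∑ n ∈ Finset.range (k + 1),
    ((k + 1).choose n : ℚ) * bernoulli' n *
      ∑ j ∈ Finset.range (n + 1),
        (-1 : ℚ) ^ j * (n.choose j : ℚ) *
          ((((Finset.range (k - n + 1)).filter (fun ℓ => ℓ + j = s)).card : ℕ) : ℚ)

/-! The Bernoulli numbers have exponential generating function `B(z)` with `B(z) (eᶻ - 1) = z eᶻ`.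
Substituting `(x - y) z` for `z` and multiplying by `e^{yz}` gives
`B((x - y) z) (e^{xz} - e^{yz}) = (x - y) z e^{xz}`. Compare coefficients of `z^{k+1}` and cancel
`x - y`: at `x = 1`, `y = X` the left side is `k + 1` times the generating polynomial
`∑ₛ K(k,s) Xˢ`, the inner sum over `ℓ` coming from the quotient `(1 - X^{k+1-n}) / (1 - X)`, and the
right side is the constant `k + 1`. -/

open Finset Polynomial
open scoped Nat

section RatAlgebra

variable {A : Type*} [CommRing A] [Algebra ℚ A]

/-- The exponential generating function `∑ aₙ zⁿ / n!` of a sequence `a`, as an `A`-linear map so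
that linear relations between sequences transfer by `map_sub` and `map_smul`. -/
def expGenFun : (ℕ → A) →ₗ[A] PowerSeries A where
  toFun a := PowerSeries.mk fun n => (n ! : ℚ)⁻¹ • a n
  map_add' a b := by ext n; simp
  map_smul' c a := by ext n; simp

lemma coeff_expGenFun (a : ℕ → A) (n : ℕ) :
    PowerSeries.coeff n (expGenFun a) = (n ! : ℚ)⁻¹ • a n :=
  PowerSeries.coeff_mk n fun n => (n ! : ℚ)⁻¹ • a n

lemma expGenFun_injective : Function.Injective (expGenFun : (ℕ → A) →ₗ[A] PowerSeries A) := by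
  intro a b h
  funext n
  have hcoeff : (n ! : ℚ)⁻¹ • a n = (n ! : ℚ)⁻¹ • b n := by
    rw [← coeff_expGenFun, h, coeff_expGenFun]
  exact (IsUnit.mk0 _ (inv_ne_zero (mod_cast n.factorial_ne_zero))).smul_left_cancel.mp hcoeff

lemma expGenFun_mul (a b : ℕ → A) :
    expGenFun a * expGenFun b =
      expGenFun fun m => ∑ n ∈ range (m + 1), (m.choose n : A) * a n * b (m - n) := by
  ext m
  rw [PowerSeries.coeff_mul, Nat.sum_antidiagonal_eq_sum_range_succ_mk, coeff_expGenFun, smul_sum]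
  refine sum_congr rfl fun n hn => ?_
  have hchoose : (n ! : ℚ)⁻¹ * ((m - n)! : ℚ)⁻¹ = (m ! : ℚ)⁻¹ * (m.choose n : ℚ) := by
    rw [Nat.cast_choose ℚ (mem_range_succ_iff.mp hn)]
    field_simp
  rw [coeff_expGenFun, coeff_expGenFun, smul_mul_smul_comm, hchoose, mul_smul,
    Nat.cast_smul_eq_nsmul, nsmul_eq_mul, mul_assoc]

lemma X_mul_expGenFun (a : ℕ → A) :
    PowerSeries.X * expGenFun a = expGenFun fun n => (n : A) * a (n - 1) := by
  ext n
  cases n with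
  | zero => simp [coeff_expGenFun]
  | succ n =>
    have hfactorial : (n ! : ℚ)⁻¹ = ((n + 1)! : ℚ)⁻¹ * ((n + 1 : ℕ) : ℚ) := by
      rw [Nat.factorial_succ]
      push_cast
      field_simp
    rw [PowerSeries.coeff_succ_X_mul, coeff_expGenFun, coeff_expGenFun, hfactorial, mul_smul,
      Nat.cast_smul_eq_nsmul, nsmul_eq_mul, Nat.add_sub_cancel]

lemma rescale_exp_eq_expGenFun (x : A) :
    PowerSeries.rescale x (PowerSeries.exp A) = expGenFun fun n => x ^ n := by
  ext n
  simp [coeff_expGenFun, PowerSeries.coeff_exp, Algebra.smul_def, mul_comm]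

lemma rescale_bernoulli'PowerSeries_eq_expGenFun (x : A) :
    PowerSeries.rescale x (bernoulli'PowerSeries A) =
      expGenFun fun n => algebraMap ℚ A (bernoulli' n) * x ^ n := by
  ext n
  simp only [bernoulli'PowerSeries, PowerSeries.coeff_rescale, PowerSeries.coeff_mk,
    coeff_expGenFun, Algebra.smul_def, div_eq_mul_inv, map_mul]
  ring

lemma rescale_bernoulli'PowerSeries_mul_rescale_exp_sub (x y : A) :
    PowerSeries.rescale (x - y) (bernoulli'PowerSeries A) *
        (PowerSeries.rescale x (PowerSeries.exp A) - PowerSeries.rescale y (PowerSeries.exp A)) =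
      (x - y) • (PowerSeries.X * PowerSeries.rescale x (PowerSeries.exp A)) := by
  have hexp : PowerSeries.rescale (x - y) (PowerSeries.exp A) *
      PowerSeries.rescale y (PowerSeries.exp A) = PowerSeries.rescale x (PowerSeries.exp A) := by
    rw [PowerSeries.exp_mul_exp_eq_exp_add, sub_add_cancel]
  have hbernoulli := congrArg (PowerSeries.rescale (x - y))
    (bernoulli'PowerSeries_mul_exp_sub_one A)
  rw [map_mul, map_mul, map_sub, map_one, PowerSeries.rescale_X] at hbernoulli
  rw [PowerSeries.smul_eq_C_mul, ← hexp]
  linear_combination PowerSeries.rescale y (PowerSeries.exp A) * hbernoulli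

lemma sum_choose_mul_bernoulli'_mul_pow_sub_pow (x y : A) (m : ℕ) :
    ∑ n ∈ range (m + 1),
        (m.choose n : A) * (algebraMap ℚ A (bernoulli' n) * (x - y) ^ n) *
          (x ^ (m - n) - y ^ (m - n)) =
      (x - y) * (m * x ^ (m - 1)) := by
  have h := rescale_bernoulli'PowerSeries_mul_rescale_exp_sub x y
  simp only [rescale_bernoulli'PowerSeries_eq_expGenFun, rescale_exp_eq_expGenFun, ← map_sub,
    expGenFun_mul, X_mul_expGenFun, ← map_smul] at h
  exact congrFun (expGenFun_injective h) m

lemma sum_choose_mul_bernoulli'_mul_geom_sum₂_of_isRegular {x y : A} (hxy : IsRegular (x - y))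
    (k : ℕ) :
    ∑ n ∈ range (k + 1),
        ((k + 1).choose n : A) * algebraMap ℚ A (bernoulli' n) *
          ((x - y) ^ n * ∑ l ∈ range (k - n + 1), y ^ l * x ^ (k - n - l)) =
      (k + 1) * x ^ k := by
  apply hxy.left
  have h := sum_choose_mul_bernoulli'_mul_pow_sub_pow x y (k + 1)
  rw [sum_range_succ, Nat.sub_self, pow_zero, pow_zero, sub_self, mul_zero, add_zero,
    Nat.add_sub_cancel, Nat.cast_add_one] at h
  simp only [← h, mul_sum (s := range (k + 1))]
  refine sum_congr rfl fun n hn => ?_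
  have hgeom : (x - y) * ∑ l ∈ range (k - n + 1), y ^ l * x ^ (k - n - l) =
      x ^ (k + 1 - n) - y ^ (k + 1 - n) := by
    have hfactor := geom_sum₂_mul y x (k - n + 1)
    rw [Nat.add_sub_cancel] at hfactor
    rw [Nat.sub_add_comm (mem_range_succ_iff.mp hn)]
    linear_combination -hfactor
  rw [← hgeom]
  ring

end RatAlgebra

lemma coeff_one_sub_X_pow_mul_geom_sum {R : Type*} [CommRing R] (n m s : ℕ) :
    ((1 - X : R[X]) ^ n * ∑ l ∈ range m, X ^ l).coeff s =
      ∑ j ∈ range (n + 1), (-1) ^ j * (n.choose j : R) * (#{l ∈ range m | l + j = s} : R) := by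
  have hbinomial : (1 - X : R[X]) ^ n =
      ∑ j ∈ range (n + 1), C ((-1) ^ j * (n.choose j : R)) * X ^ j := by
    rw [sub_eq_neg_add, add_pow]
    refine sum_congr rfl fun j _ => ?_
    rw [neg_pow, one_pow, mul_one, C_mul, C_pow, C_neg, C_1, C_eq_natCast]
    ring
  have hcount (j : ℕ) : (X ^ j * ∑ l ∈ range m, X ^ l : R[X]).coeff s =
      #{l ∈ range m | l + j = s} := by
    simp only [mul_sum, finsetSum_coeff, ← pow_add, coeff_X_pow, natCast_card_filter, add_comm j,
      eq_comm (a := s)]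
  simp only [hbinomial, sum_mul, finsetSum_coeff, mul_assoc (C _), coeff_C_mul, hcount]

/-- The generating polynomial `∑ₛ K(k,s) Xˢ`, in which the sums over `j` and `ℓ` have been
resummed to `(1 - X)ⁿ` and a geometric sum. -/
noncomputable def guttPolynomial (k : ℕ) : ℚ[X] :=
  C (1 / (k + 1 : ℚ)) * ∑ n ∈ range (k + 1),
    C (((k + 1).choose n : ℚ) * bernoulli' n) * ((1 - X) ^ n * ∑ l ∈ range (k - n + 1), X ^ l)

lemma coeff_guttPolynomial (k s : ℕ) : (guttPolynomial k).coeff s = guttK k s := by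
  simp only [guttPolynomial, guttK, coeff_C_mul, finsetSum_coeff, coeff_one_sub_X_pow_mul_geom_sum]

lemma guttPolynomial_eq_one (k : ℕ) : guttPolynomial k = 1 := by
  have hregular : IsRegular (1 - X : ℚ[X]) := .of_ne_zero (sub_ne_zero.mpr (X_ne_C 1).symm)
  have hsum : ∑ n ∈ range (k + 1), C (((k + 1).choose n : ℚ) * bernoulli' n) *
      ((1 - X) ^ n * ∑ l ∈ range (k - n + 1), X ^ l) = C (k + 1 : ℚ) := by
    simpa using sum_choose_mul_bernoulli'_mul_geom_sum₂_of_isRegular hregular k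
  rw [guttPolynomial, hsum, ← C_mul, one_div_mul_cancel k.cast_add_one_ne_zero, C_1]

theorem stmt0 (k : ℕ) :
    guttK k 0 = 1 ∧ ∀ s : ℕ, 1 ≤ s → s ≤ k → guttK k s = 0 := by
  simp only [← coeff_guttPolynomial, guttPolynomial_eq_one]
  exact ⟨coeff_one_zero, fun s hs _ => coeff_one.trans (if_neg (Nat.one_le_iff_ne_zero.mp hs))⟩
end

section
/- (Carlitz's identity) For all natural numbers k and m, (−1)^k · Σ_{j=0}^{k} C(k,j) · B_{m+j} = (−1)^m · Σ_{i=0}^{m} C(m,i) · B_{k+i}. -/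
/-!
Let `L : ℤ[X] → ℚ` be the additive functional with `L (X ^ n) = B_n`. The identity
`∑ j, C(n, j) B_j = (-1) ^ n B_n` says that `L` is invariant under the reflection `X ↦ -1 - X`.
This reflection turns `X ^ m (X + 1) ^ k` into `(-1) ^ (k + m) X ^ k (X + 1) ^ m`; expanding the
powers of `X + 1` by the binomial theorem gives the two sides of Carlitz's identity.
-/

open Finset

section Umbral

open Polynomial

theorem X_pow_mul_X_add_one_pow_comp_neg_one_sub_X {R : Type*} [CommRing R] (m k : ℕ) :
    (X ^ m * (X + 1) ^ k : R[X]).comp (-1 - X) = (-1 : R) ^ (k + m) • (X ^ k * (X + 1) ^ m) := by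
  have reflect_X : (-1 - X : R[X]) = -1 * (X + 1) := by ring
  have reflect_X_add_one : (-1 - X + 1 : R[X]) = -1 * X := by ring
  simp only [mul_comp, pow_comp, add_comp, X_comp, one_comp, reflect_X_add_one]
  rw [reflect_X, mul_pow, mul_pow, smul_eq_C_mul, C_pow, C_neg, C_1]
  ring

variable {M : Type*} [AddCommGroup M] (a : ℕ → M)

/-- The umbral evaluation attached to a sequence `a`: the additive functional on `ℤ[X]` sending
`X ^ n` to `a n`. Integer coefficients suffice for binomial sums, so that `a` may take values in
any abelian group. -/
noncomputable def umbralEval : ℤ[X] →ₗ[ℤ] M :=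
  (basisMonomials ℤ).constr ℤ a

theorem umbralEval_X_pow (n : ℕ) : umbralEval a (X ^ n) = a n := by
  rw [umbralEval, X_pow_eq_monomial]
  exact (basisMonomials ℤ).constr_basis ℤ a n

theorem umbralEval_X_pow_mul_X_add_one_pow (m k : ℕ) :
    umbralEval a (X ^ m * (X + 1) ^ k) = ∑ j ∈ range (k + 1), k.choose j • a (m + j) := by
  have binomial_expansion : (X ^ m * (X + 1) ^ k : ℤ[X]) =
      ∑ j ∈ range (k + 1), k.choose j • X ^ (m + j) := by
    simp only [add_pow, one_pow, mul_one, mul_sum, nsmul_eq_mul, pow_add]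
    exact sum_congr rfl fun j _ ↦ by ring
  simp only [binomial_expansion, map_sum, map_nsmul, umbralEval_X_pow]

variable {a}

theorem umbralEval_comp_neg_one_sub_X
    (ha : ∀ n, ∑ j ∈ range (n + 1), n.choose j • a j = (-1 : ℤ) ^ n • a n) (p : ℤ[X]) :
    umbralEval a (p.comp (-1 - X)) = umbralEval a p := by
  induction p using Polynomial.induction_on' with
  | add p q hp hq => rw [add_comp, map_add, map_add, hp, hq]
  | monomial n c =>
    have X_pow_case : umbralEval a ((X ^ n).comp (-1 - X)) = umbralEval a (X ^ n) := calc
      umbralEval a ((X ^ n).comp (-1 - X))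
          = umbralEval a ((-1 : ℤ) ^ n • (X ^ 0 * (X + 1) ^ n)) := by
        simpa only [pow_zero, mul_one, zero_add] using
          congrArg (umbralEval a) (X_pow_mul_X_add_one_pow_comp_neg_one_sub_X n 0)
      _ = (-1 : ℤ) ^ n • (-1 : ℤ) ^ n • a n := by
        simp only [map_smul, umbralEval_X_pow_mul_X_add_one_pow, zero_add, ha]
      _ = umbralEval a (X ^ n) := by
        rw [smul_smul, pow_mul_pow_eq_one n (by norm_num), one_smul, umbralEval_X_pow]
    rw [← smul_X_eq_monomial, smul_comp, map_smul, map_smul, X_pow_case]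

theorem neg_one_pow_smul_sum_choose_smul_comm
    (ha : ∀ n, ∑ j ∈ range (n + 1), n.choose j • a j = (-1 : ℤ) ^ n • a n) (k m : ℕ) :
    (-1 : ℤ) ^ k • ∑ j ∈ range (k + 1), k.choose j • a (m + j) =
      (-1 : ℤ) ^ m • ∑ i ∈ range (m + 1), m.choose i • a (k + i) := by
  have sign_cancel : (-1 : ℤ) ^ k * (-1) ^ (k + m) = (-1) ^ m := by
    rw [pow_add, ← mul_assoc, pow_mul_pow_eq_one k (by norm_num), one_mul]
  rw [← umbralEval_X_pow_mul_X_add_one_pow, ← umbralEval_X_pow_mul_X_add_one_pow,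
    ← umbralEval_comp_neg_one_sub_X ha, X_pow_mul_X_add_one_pow_comp_neg_one_sub_X, map_smul,
    smul_smul, sign_cancel]

end Umbral

theorem sum_range_succ_choose_mul_bernoulli (n : ℕ) :
    ∑ j ∈ range (n + 1), (n.choose j : ℚ) * bernoulli j = (-1) ^ n * bernoulli n := by
  rw [← bernoulli'_eq_bernoulli, ← Polynomial.bernoulli_eval_one, Polynomial.bernoulli,
    Polynomial.eval_finsetSum]
  simp only [Polynomial.eval_monomial, one_pow, mul_one, mul_comm]

/-- Carlitz's identity for ordinary Bernoulli numbers (with `B₁ = −1/2`):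
`(−1)^k Σ_{j=0}^{k} C(k,j) B_{m+j} = (−1)^m Σ_{i=0}^{m} C(m,i) B_{k+i}`. -/
theorem stmt1 (k m : ℕ) :
    (-1 : ℚ) ^ k * ∑ j ∈ Finset.range (k + 1), (k.choose j : ℚ) * bernoulli (m + j)
      = (-1 : ℚ) ^ m * ∑ i ∈ Finset.range (m + 1), (m.choose i : ℚ) * bernoulli (k + i) := by
  have self_dual (n : ℕ) :
      ∑ j ∈ range (n + 1), n.choose j • bernoulli j = (-1 : ℤ) ^ n • bernoulli n := by
    simpa [zsmul_eq_mul] using sum_range_succ_choose_mul_bernoulli n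
  simpa [zsmul_eq_mul] using neg_one_pow_smul_sum_choose_smul_comm self_dual k m
end

section
/- Let A be an associative unital algebra over ℚ (or over a field of characteristic zero), let x, y ∈ A, and write (ad x)(w) = x·w − w·x. Then for every natural number k: Σ_{n=0}^{k} C(k,n) · B*_n · (1/(k−n+1)) · Σ_{ℓ=0}^{k−n} x^{k−n−ℓ} · ((ad x)^n y) · x^ℓ = x^k · y. (This is the algebraic content of the Gutt star-product formula ξ^k ⋆ η = Σ_{j=0}^{k} C(k,j) B*_j ξ^{k−j} (ad_ξ)^j(η), transported to the universal enveloping algebra via the symmetrization PBW map.) -/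
/-!
Left and right multiplication by `x` are commuting operators `a` and `b` with `a - b = ad x`, so it
suffices to prove an identity for commuting elements `a = b + d`. There
`(m + 1)⁻¹ ∑ l ≤ m, a ^ (m - l) * b ^ l` is the formal integral `∫₀¹ (b + t d) ^ m dt`, whose
coefficient at `b ^ (m - j) * d ^ j` is `C(m, j) / (j + 1)`. Hence the coefficient of
`b ^ (k - s) * d ^ s` in the whole sum is `C(k, s) ∑ n ≤ s, C(s, n) B*_n / (s - n + 1)`. The inner
sum is `1` by the defining recurrence of the `B*_n`, and the binomial theorem gives `(b + d) ^ k`.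
-/

open Finset

theorem sum_add_pow_mul_pow_eq_sum_choose {S : Type*} [Semiring S] {b d : S} (h : Commute b d)
    (m : ℕ) :
    ∑ l ∈ range (m + 1), (b + d) ^ (m - l) * b ^ l =
      ∑ j ∈ range (m + 1), (m + 1).choose (j + 1) • (b ^ (m - j) * d ^ j) := by
  have h_comm : Commute b (b + d) := (Commute.refl b).add_right h
  induction m with
  | zero => simp
  | succ m ih =>
    have peel_left : ∑ l ∈ range (m + 2), (b + d) ^ (m + 1 - l) * b ^ l =
        b * ∑ l ∈ range (m + 1), (b + d) ^ (m - l) * b ^ l + (b + d) ^ (m + 1) := by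
      rw [sum_range_succ', mul_sum]
      simp only [Nat.add_sub_add_right, Nat.sub_zero, pow_zero, mul_one, pow_succ',
        ← mul_assoc, (h_comm.pow_right _).eq]
    have raise_degree : ∑ j ∈ range (m + 2), (m + 1).choose (j + 1) • (b ^ (m + 1 - j) * d ^ j) =
        b * ∑ j ∈ range (m + 1), (m + 1).choose (j + 1) • (b ^ (m - j) * d ^ j) := by
      rw [sum_range_succ, Nat.choose_succ_self, zero_smul, add_zero, mul_sum]
      refine sum_congr rfl fun j hj => ?_
      rw [Nat.sub_add_comm (mem_range_succ_iff.mp hj), pow_succ', mul_assoc, mul_smul_comm]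
    have binomial : (b + d) ^ (m + 1) =
        ∑ j ∈ range (m + 2), (m + 1).choose j • (b ^ (m + 1 - j) * d ^ j) := by
      rw [add_comm b d, h.symm.add_pow]
      refine sum_congr rfl fun j _ => ?_
      rw [(h.symm.pow_pow _ _).eq, nsmul_eq_mul, Nat.cast_comm]
    simp only [Nat.choose_succ_succ' (m + 1), add_smul, sum_add_distrib]
    rw [peel_left, ih, raise_degree, ← binomial, add_comm]

theorem inv_smul_sum_add_pow_mul_pow {S : Type*} [Semiring S] [Module ℚ S] {b d : S}
    (h : Commute b d) (m : ℕ) :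
    ((m + 1 : ℕ) : ℚ)⁻¹ • ∑ l ∈ range (m + 1), (b + d) ^ (m - l) * b ^ l =
      ∑ j ∈ range (m + 1), ((m.choose j : ℚ) * (1 / (j + 1))) • (b ^ (m - j) * d ^ j) := by
  rw [sum_add_pow_mul_pow_eq_sum_choose h, smul_sum]
  refine sum_congr rfl fun j _ => ?_
  have absorb : ((m + 1 : ℕ) : ℚ) * m.choose j = (m + 1).choose (j + 1) * ((j : ℚ) + 1) :=
    mod_cast Nat.add_one_mul_choose_eq m j
  rw [← Nat.cast_smul_eq_nsmul ℚ, smul_smul]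
  congr 1
  field_simp
  linear_combination -absorb

theorem sum_choose_smul_sum_choose_smul {R M : Type*} [CommSemiring R] [AddCommMonoid M]
    [Module R M] (u v : ℕ → R) (w : ℕ → M) (k : ℕ) :
    ∑ n ∈ range (k + 1), (k.choose n * u n) •
        ∑ j ∈ range (k - n + 1), ((k - n).choose j * v j) • w (n + j) =
      ∑ s ∈ range (k + 1),
        (k.choose s * ∑ n ∈ range (s + 1), s.choose n * u n * v (s - n)) • w s := by
  calc
    _ = ∑ n ∈ range (k + 1), ∑ j ∈ range (k + 1 - n),
          (k.choose (n + j) * ((n + j).choose n * u n * v j)) • w (n + j) := by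
      refine sum_congr rfl fun n hn => ?_
      rw [smul_sum, Nat.sub_add_comm (mem_range_succ_iff.mp hn)]
      refine sum_congr rfl fun j _ => ?_
      have trinomial : (k.choose (n + j) * (n + j).choose n : R) =
          k.choose n * (k - n).choose j := by
        have := Nat.choose_mul (n := k) (Nat.le_add_right n j)
        rw [Nat.add_sub_cancel_left] at this
        exact mod_cast congrArg (Nat.cast (R := R)) this
      rw [smul_smul, mul_mul_mul_comm, ← trinomial]
      congr 1
      ring
    _ = _ := by
      rw [← sum_range_diag_flip]
      refine sum_congr rfl fun s _ => ?_
      rw [mul_sum, sum_smul]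
      refine sum_congr rfl fun n hn => ?_
      rw [Nat.add_sub_cancel' (mem_range_succ_iff.mp hn)]

theorem sum_choose_mul_bernoulli'_div (s : ℕ) :
    ∑ n ∈ range (s + 1), (s.choose n : ℚ) * bernoulli' n * (1 / ((s - n : ℕ) + 1)) = 1 := by
  refine (sum_congr rfl fun n hn => ?_).trans (bernoulli'_spec s)
  have hns : n ≤ s := mem_range_succ_iff.mp hn
  rw [Nat.choose_symm hns, Nat.cast_sub hns]
  ring

theorem sum_bernoulli'_smul_sum_pow_mul_pow {S : Type*} [Ring S] [Algebra ℚ S] {a b : S}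
    (h : Commute a b) (k : ℕ) :
    ∑ n ∈ range (k + 1), ((k.choose n : ℚ) * bernoulli' n * (1 / ((k - n + 1 : ℕ) : ℚ))) •
        ((∑ l ∈ range (k - n + 1), a ^ (k - n - l) * b ^ l) * (a - b) ^ n) = a ^ k := by
  obtain ⟨d, rfl⟩ : ∃ d, a = b + d := ⟨a - b, (add_sub_cancel b a).symm⟩
  have hbd : Commute b d := by simpa using h.symm.sub_right (Commute.refl b)
  calc
    _ = ∑ n ∈ range (k + 1), ((k.choose n : ℚ) * bernoulli' n) •
          ∑ j ∈ range (k - n + 1), (((k - n).choose j : ℚ) * (1 / (j + 1))) •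
            (b ^ (k - (n + j)) * d ^ (n + j)) := by
      refine sum_congr rfl fun n _ => ?_
      rw [add_sub_cancel_left, mul_smul, one_div, ← smul_mul_assoc,
        inv_smul_sum_add_pow_mul_pow hbd, sum_mul]
      simp only [smul_mul_assoc, mul_assoc, ← pow_add, Nat.sub_sub, add_comm _ n]
    _ = ∑ s ∈ range (k + 1), (k.choose s : ℚ) • (b ^ (k - s) * d ^ s) := by
      rw [sum_choose_smul_sum_choose_smul bernoulli' (fun j => 1 / ((j : ℚ) + 1))
        (fun s => b ^ (k - s) * d ^ s)]
      simp only [sum_choose_mul_bernoulli'_div, mul_one]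
    _ = (b + d) ^ k := by
      rw [add_comm b d, hbd.symm.add_pow]
      refine sum_congr rfl fun s _ => ?_
      rw [(hbd.pow_pow _ _).eq, Nat.cast_smul_eq_nsmul, nsmul_eq_mul, Nat.cast_comm]

theorem mulLeft_sub_mulRight_pow_apply (R : Type*) {A : Type*} [Semiring R]
    [NonUnitalNonAssocRing A] [Module R A] [SMulCommClass R A A] [IsScalarTower R A A]
    (x y : A) (n : ℕ) :
    ((LinearMap.mulLeft R x - LinearMap.mulRight R x) ^ n) y =
      (fun w => x * w - w * x)^[n] y :=
  Module.End.pow_apply _ n y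

/-- The algebraic content of the Gutt star-product formula
`ξ^k ⋆ η = Σ_{j=0}^{k} C(k,j) B*_j ξ^{k−j} (ad_ξ)^j(η)` transported to an associative
unital `ℚ`-algebra via the symmetrization PBW map:
`Σ_{n=0}^{k} C(k,n) B*_n (1/(k−n+1)) Σ_{ℓ=0}^{k−n} x^{k−n−ℓ} ((ad x)^n y) x^ℓ = x^k y`. -/
theorem stmt2 (A : Type*) [Ring A] [Algebra ℚ A] (x y : A) (k : ℕ) :
    ∑ n ∈ Finset.range (k + 1),
      ((k.choose n : ℚ) * bernoulli' n * (1 / ((k - n + 1 : ℕ) : ℚ))) •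
        ∑ ℓ ∈ Finset.range (k - n + 1),
          x ^ (k - n - ℓ) * ((fun w => x * w - w * x)^[n] y) * x ^ ℓ
      = x ^ k * y := by
  have operator_identity := LinearMap.congr_fun
    (sum_bernoulli'_smul_sum_pow_mul_pow (LinearMap.commute_mulLeft_right (R := ℚ) x x) k) y
  simpa only [LinearMap.sum_apply, LinearMap.smul_apply, Module.End.mul_apply,
    mulLeft_sub_mulRight_pow_apply, LinearMap.pow_mulLeft, LinearMap.pow_mulRight,
    LinearMap.mulLeft_apply, LinearMap.mulRight_apply, ← mul_assoc] using operator_identity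
end

section
/- For every natural number n, the absolute value of the n-th Bernoulli number B*_n satisfies |B*_n| ≤ n!. -/
/-!
The numbers `b n = B n / n!` are the coefficients of `z / (exp z - 1)`. Comparing coefficients in
`(exp z - 1) / z * ∑ b n z ^ n = 1` expresses `-b (n + 1)` as a combination of `b 0, …, b n` with
nonnegative weights `1 / (j + 2)!`, whose total is at most `∑ 1 / (j + 2)! = exp 1 - 2 ≤ 1`. Hence
`|b n|` never exceeds `|b 0| = 1`. The convention for `B 1` only affects a sign.
-/

open Finset
open scoped Nat

section Recurrence

variable {R : Type*} [Semiring R] [PartialOrder R] [IsOrderedRing R]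

theorem le_of_le_sum_antidiagonal_mul {a w : ℕ → R} {M : R} (hM : 0 ≤ M) (hw : ∀ j, 0 ≤ w j)
    (hw_sum : ∀ n, ∑ j ∈ range n, w j ≤ 1) (ha_zero : a 0 ≤ M)
    (ha_succ : ∀ n, a (n + 1) ≤ ∑ p ∈ antidiagonal n, w p.2 * a p.1) (n : ℕ) : a n ≤ M := by
  induction n using Nat.strong_induction_on with
  | _ n ih =>
    cases n with
    | zero => exact ha_zero
    | succ n =>
      calc a (n + 1) ≤ ∑ p ∈ antidiagonal n, w p.2 * a p.1 := ha_succ n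
        _ ≤ ∑ p ∈ antidiagonal n, w p.2 * M := by
          gcongr with p hp
          · exact hw p.2
          · exact ih p.1 (Nat.antidiagonal.fst_lt hp)
        _ = (∑ j ∈ range (n + 1), w j) * M := by
          rw [← sum_mul, ← Nat.sum_antidiagonal_swap,
            Nat.sum_antidiagonal_eq_sum_range_succ_mk]
          rfl
        _ ≤ M := mul_le_of_le_one_left hM (hw_sum (n + 1))

end Recurrence

section Factorial

variable {K : Type*} [Field K] [LinearOrder K] [IsStrictOrderedRing K]

theorem inv_factorial_add_two_le_sub (j : ℕ) :
    ((j + 2)! : K)⁻¹ ≤ ((j + 1)! : K)⁻¹ - ((j + 2)! : K)⁻¹ := by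
  have h_eq : ((j + 1)! : K)⁻¹ = (j + 2) * ((j + 2)! : K)⁻¹ := by
    rw [Nat.factorial_succ (j + 1)]
    push_cast
    field_simp
    ring
  have h_nonneg : 0 ≤ (j : K) * ((j + 2)! : K)⁻¹ := by positivity
  linarith

theorem sum_range_inv_factorial_add_two_le_one (n : ℕ) :
    ∑ j ∈ range n, ((j + 2)! : K)⁻¹ ≤ 1 := by
  calc ∑ j ∈ range n, ((j + 2)! : K)⁻¹
      ≤ ∑ j ∈ range n, (((j + 1)! : K)⁻¹ - ((j + 2)! : K)⁻¹) :=
        sum_le_sum fun j _ ↦ inv_factorial_add_two_le_sub j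
    _ = 1 - ((n + 1)! : K)⁻¹ := by
        simpa using sum_range_sub' (fun j ↦ ((j + 1)! : K)⁻¹) n
    _ ≤ 1 := sub_le_self 1 (by positivity)

end Factorial

theorem sum_antidiagonal_inv_factorial_mul_bernoulli_div_factorial {n : ℕ} (hn : n ≠ 0) :
    ∑ p ∈ antidiagonal n, ((p.2 + 1)! : ℚ)⁻¹ * (bernoulli p.1 / p.1 !) = 0 := by
  have h_spec := bernoulli_spec' n
  rw [if_neg hn] at h_spec
  have h_term : ∀ p ∈ antidiagonal n,
      ((p.1 + p.2).choose p.2 : ℚ) / (p.2 + 1) * bernoulli p.1 =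
        n ! * (((p.2 + 1)! : ℚ)⁻¹ * (bernoulli p.1 / p.1 !)) := by
    intro p hp
    rw [← mem_antidiagonal.mp hp, Nat.cast_choose ℚ (Nat.le_add_left p.2 p.1),
      Nat.add_sub_cancel, Nat.factorial_succ p.2]
    push_cast
    field_simp
  rw [sum_congr rfl h_term, ← mul_sum] at h_spec
  exact (mul_eq_zero.mp h_spec).resolve_left (by positivity)

theorem bernoulli_succ_div_factorial (n : ℕ) :
    bernoulli (n + 1) / (n + 1)! =
      -∑ p ∈ antidiagonal n, ((p.2 + 2)! : ℚ)⁻¹ * (bernoulli p.1 / p.1 !) := by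
  have h_sum := sum_antidiagonal_inv_factorial_mul_bernoulli_div_factorial n.succ_ne_zero
  rw [Nat.sum_antidiagonal_succ'] at h_sum
  exact eq_neg_of_add_eq_zero_left (by simpa using h_sum)

theorem abs_bernoulli_div_factorial_le_one (n : ℕ) : |bernoulli n / (n ! : ℚ)| ≤ 1 := by
  refine le_of_le_sum_antidiagonal_mul (a := fun n ↦ |bernoulli n / (n ! : ℚ)|)
    (w := fun j ↦ ((j + 2)! : ℚ)⁻¹) zero_le_one (fun j ↦ by positivity)
    sum_range_inv_factorial_add_two_le_one (by simp) (fun n ↦ ?_) n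
  calc |bernoulli (n + 1) / (n + 1)!|
      = |∑ p ∈ antidiagonal n, ((p.2 + 2)! : ℚ)⁻¹ * (bernoulli p.1 / p.1 !)| := by
        rw [bernoulli_succ_div_factorial, abs_neg]
    _ ≤ ∑ p ∈ antidiagonal n, |((p.2 + 2)! : ℚ)⁻¹ * (bernoulli p.1 / p.1 !)| :=
        abs_sum_le_sum_abs _ _
    _ = ∑ p ∈ antidiagonal n, ((p.2 + 2)! : ℚ)⁻¹ * |bernoulli p.1 / (p.1 ! : ℚ)| :=
        sum_congr rfl fun p _ ↦ by rw [abs_mul, abs_of_nonneg (by positivity)]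

theorem abs_bernoulli'_eq_abs_bernoulli (n : ℕ) : |bernoulli' n| = |bernoulli n| := by
  rw [bernoulli'_eq_bernoulli, abs_mul, abs_neg_one_pow, one_mul]

/-- For every `n`, the Bernoulli number `B*_n` (with `B*_1 = +1/2`) satisfies `|B*_n| ≤ n!`. -/
theorem stmt4 (n : ℕ) : |bernoulli' n| ≤ (n.factorial : ℚ) := by
  have h_div : |bernoulli n| / (n ! : ℚ) ≤ 1 := by
    simpa only [abs_div, Nat.abs_cast] using abs_bernoulli_div_factorial_le_one n
  rw [abs_bernoulli'_eq_abs_bernoulli]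
  exact (div_le_one (by positivity)).mp h_div
end

section
/- For every real number z with |z| < 2π, the series Σ_{n=0}^{∞} |B*_n| · |z|^n / n! converges (i.e., the function n ↦ |B*_n|·|z|^n/n! is summable). -/
/-!
For `k ≥ 1`, Euler's formula gives `|B*_{2k}| / (2k)! = 2 ζ(2k) / (2π)^{2k}`, and
`ζ(2k) ≤ ζ(2) = π² / 6`. The odd Bernoulli numbers vanish apart from `B*_1 = 1 / 2`, so
`|B*_n| / n! ≤ (π² / 3) / (2π)^n` for all `n`, and the series is dominated by a geometric series of
ratio `|z| / (2π) < 1`.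
-/

theorem hasSum_zeta_nat_abs_bernoulli' {k : ℕ} (hk : k ≠ 0) :
    HasSum (fun n : ℕ => 1 / (n : ℝ) ^ (2 * k))
      ((2 * Real.pi) ^ (2 * k) / 2 * (|(bernoulli' (2 * k) : ℝ)| / (2 * k).factorial)) := by
  have hzeta := hasSum_zeta_nat hk
  have hnonneg := hzeta.nonneg fun n => by positivity
  have hpow : (2 : ℝ) ^ (2 * k) = 2 ^ (2 * k - 1) * 2 :=
    (pow_sub_one_mul (by positivity) 2).symm
  convert hzeta using 1
  rw [← abs_of_nonneg hnonneg, bernoulli_eq_bernoulli'_of_ne_one (by lia)]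
  simp only [abs_div, abs_mul, abs_pow, abs_neg, abs_one, one_pow, one_mul, Nat.abs_ofNat,
    Nat.abs_cast, abs_of_pos Real.pi_pos]
  rw [mul_pow, hpow]
  ring

theorem one_div_natCast_pow_antitone {𝕜 : Type*} [Field 𝕜] [LinearOrder 𝕜] [IsStrictOrderedRing 𝕜]
    (j : ℕ) : Antitone fun n : ℕ => 1 / (j : 𝕜) ^ n := by
  simp only [one_div, ← inv_pow]
  exact pow_right_anti₀ (by positivity) (Nat.cast_inv_le_one j)

theorem abs_bernoulli'_two_mul_div_factorial_le {k : ℕ} (hk : k ≠ 0) :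
    |(bernoulli' (2 * k) : ℝ)| / (2 * k).factorial ≤
      Real.pi ^ 2 / 3 / (2 * Real.pi) ^ (2 * k) := by
  have hzeta_le : (2 * Real.pi) ^ (2 * k) / 2 *
      (|(bernoulli' (2 * k) : ℝ)| / (2 * k).factorial) ≤ Real.pi ^ 2 / 6 :=
    hasSum_le (fun j => one_div_natCast_pow_antitone j (by lia : 2 ≤ 2 * k))
      (hasSum_zeta_nat_abs_bernoulli' hk) hasSum_zeta_two
  rw [le_div_iff₀ (by positivity)]
  linarith

theorem abs_bernoulli'_div_factorial_le (n : ℕ) :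
    |(bernoulli' n : ℝ)| / n.factorial ≤ Real.pi ^ 2 / 3 / (2 * Real.pi) ^ n := by
  have hpi := Real.pi_gt_three
  rcases n.even_or_odd' with ⟨k, rfl | rfl⟩
  · rcases eq_or_ne k 0 with rfl | hk
    · have hone_le : 1 ≤ Real.pi ^ 2 / 3 := by nlinarith
      simpa using hone_le
    · exact abs_bernoulli'_two_mul_div_factorial_le hk
  · rcases eq_or_ne k 0 with rfl | hk
    · have hhalf_le : 1 / 2 ≤ Real.pi ^ 2 / 3 / (2 * Real.pi) := by
        rw [le_div_iff₀ Real.two_pi_pos]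
        nlinarith
      simpa using hhalf_le
    · rw [bernoulli'_eq_zero_of_odd (odd_two_mul_add_one k) (by lia), Rat.cast_zero, abs_zero,
        zero_div]
      positivity

/-- For `|z| < 2π`, the series `Σ_{n} |B*_n| |z|^n / n!` converges (radius of convergence
of `z/(1 − e^{−z})` is `2π`). -/
theorem stmt5 (z : ℝ) (hz : |z| < 2 * Real.pi) :
    Summable (fun n : ℕ => |((bernoulli' n : ℚ) : ℝ)| * |z| ^ n / (n.factorial : ℝ)) := by
  have hratio : |z| / (2 * Real.pi) < 1 := (div_lt_one Real.two_pi_pos).2 hz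
  have hgeom : Summable fun n : ℕ => Real.pi ^ 2 / 3 * (|z| / (2 * Real.pi)) ^ n :=
    (summable_geometric_of_lt_one (by positivity) hratio).mul_left _
  refine hgeom.of_nonneg_of_le (fun n => by positivity) fun n => ?_
  calc |(bernoulli' n : ℝ)| * |z| ^ n / n.factorial
      = |(bernoulli' n : ℝ)| / n.factorial * |z| ^ n := by ring
    _ ≤ Real.pi ^ 2 / 3 / (2 * Real.pi) ^ n * |z| ^ n :=
      mul_le_mul_of_nonneg_right (abs_bernoulli'_div_factorial_le n) (by positivity)
    _ = Real.pi ^ 2 / 3 * (|z| / (2 * Real.pi)) ^ n := by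
      rw [div_pow]
      ring
end

section
/- Let R and ε be real numbers with 0 ≤ R ≤ 1 and ε ≥ 0. Then for every natural number k: Σ_{j=0}^{k} (k!)² · j! · ((2k−j)!)^R / ( ((k−j)!)² · (j!)² · (k!)^{2R+2ε} ) ≥ (k!)^{1−R−2ε}. In particular, if R + 2ε < 1 the left-hand side tends to ∞ as k → ∞. -/
open Real Filter

/-- The contribution of `E^j P^(k-j) Q^(k-j)` to the seminorm `n_R` of the Gutt star product
`P^k / k!^(R+ε) ⋆_z Q^k / k!^(R+ε)` on the Heisenberg algebra, where `E = (z/2) [P, Q]` and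
`P`, `Q`, `E` have norm one. The monomial occurs in `P^k ⋆_z Q^k` with coefficient
`(k.choose j)² j!`, here written out in factorials, and `n_R` weights it by `((2k-j)!)^R` because
its degree is `2k - j`. Only `j ≤ k` is meaningful: the subtractions are truncated. -/
noncomputable def guttStarTerm (R ε : ℝ) (k j : ℕ) : ℝ :=
  (k.factorial : ℝ) ^ 2 * (j.factorial : ℝ)
    * ((2 * k - j).factorial : ℝ) ^ R
    / (((k - j).factorial : ℝ) ^ 2 * (j.factorial : ℝ) ^ 2
        * (k.factorial : ℝ) ^ (2 * R + 2 * ε))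

/-- The seminorm `n_R` of `P^k / k!^(R+ε) ⋆_z Q^k / k!^(R+ε)`, in the normalization of
`guttStarTerm`. Its blow-up as `k → ∞` shows `⋆_z` to be discontinuous in the `Sym_R`-topology. -/
noncomputable def guttStarSeminorm (R ε : ℝ) (k : ℕ) : ℝ :=
  ∑ j ∈ Finset.range (k + 1), guttStarTerm R ε k j

lemma guttStarTerm_nonneg (R ε : ℝ) (k j : ℕ) : 0 ≤ guttStarTerm R ε k j := by
  unfold guttStarTerm
  positivity

lemma guttStarTerm_self (R ε : ℝ) (k : ℕ) :
    guttStarTerm R ε k k = (k.factorial : ℝ) ^ (1 - R - 2 * ε) := by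
  have hk : (0 : ℝ) < k.factorial := mod_cast k.factorial_pos
  have hsub : 2 * k - k = k := by lia
  calc guttStarTerm R ε k k
    _ = (k.factorial : ℝ) * (k.factorial : ℝ) ^ R / (k.factorial : ℝ) ^ (2 * R + 2 * ε) := by
      have hsq : (k.factorial : ℝ) ^ 2 ≠ 0 := by positivity
      simp only [guttStarTerm, hsub, Nat.sub_self, Nat.factorial_zero, Nat.cast_one, one_pow,
        one_mul, mul_assoc, mul_div_mul_left _ _ hsq]
    _ = (k.factorial : ℝ) ^ (1 + R - (2 * R + 2 * ε)) := by
      rw [rpow_sub hk, rpow_add hk 1 R, rpow_one]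
    _ = (k.factorial : ℝ) ^ (1 - R - 2 * ε) := by ring_nf

lemma rpow_factorial_le_guttStarSeminorm (R ε : ℝ) (k : ℕ) :
    (k.factorial : ℝ) ^ (1 - R - 2 * ε) ≤ guttStarSeminorm R ε k :=
  calc (k.factorial : ℝ) ^ (1 - R - 2 * ε)
    _ = guttStarTerm R ε k k := (guttStarTerm_self R ε k).symm
    _ ≤ guttStarSeminorm R ε k :=
      Finset.single_le_sum (fun j _ => guttStarTerm_nonneg R ε k j) (Finset.self_mem_range_succ k)

lemma tendsto_rpow_factorial_atTop {s : ℝ} (hs : 0 < s) :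
    Tendsto (fun k : ℕ => (k.factorial : ℝ) ^ s) atTop atTop :=
  (tendsto_rpow_atTop hs).comp (tendsto_natCast_atTop_atTop.comp factorial_tendsto_atTop)

theorem stmt7_general (R ε : ℝ) :
    (∀ k : ℕ, (k.factorial : ℝ) ^ (1 - R - 2 * ε) ≤ guttStarSeminorm R ε k)
    ∧ (R + 2 * ε < 1 → Tendsto (guttStarSeminorm R ε) atTop atTop) := by
  refine ⟨rpow_factorial_le_guttStarSeminorm R ε, fun h => ?_⟩
  have hs : 0 < 1 - R - 2 * ε := by linarith
  exact tendsto_atTop_mono (rpow_factorial_le_guttStarSeminorm R ε)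
    (tendsto_rpow_factorial_atTop hs)

/-- The Heisenberg-algebra counterexample estimate: for `0 ≤ R ≤ 1`, `ε ≥ 0` and every `k`,
`Σ_{j=0}^{k} (k!)² j! ((2k−j)!)^R / (((k−j)!)² (j!)² (k!)^{2R+2ε}) ≥ (k!)^{1−R−2ε}`;
in particular, if `R + 2ε < 1` the left-hand side tends to `∞` as `k → ∞`. -/
theorem stmt7 (R ε : ℝ) (hR0 : 0 ≤ R) (hR1 : R ≤ 1) (hε : 0 ≤ ε) :
    (∀ k : ℕ,
      ∑ j ∈ Finset.range (k + 1),
        (k.factorial : ℝ) ^ 2 * (j.factorial : ℝ)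
          * ((2 * k - j).factorial : ℝ) ^ R
          / (((k - j).factorial : ℝ) ^ 2 * (j.factorial : ℝ) ^ 2
              * (k.factorial : ℝ) ^ (2 * R + 2 * ε))
        ≥ (k.factorial : ℝ) ^ (1 - R - 2 * ε))
    ∧ (R + 2 * ε < 1 →
        Tendsto (fun k : ℕ =>
          ∑ j ∈ Finset.range (k + 1),
            (k.factorial : ℝ) ^ 2 * (j.factorial : ℝ)
              * ((2 * k - j).factorial : ℝ) ^ R
              / (((k - j).factorial : ℝ) ^ 2 * (j.factorial : ℝ) ^ 2
                  * (k.factorial : ℝ) ^ (2 * R + 2 * ε)))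
          atTop atTop) :=
  stmt7_general R ε
end

section
/- Let δ be a real number with 0 < δ ≤ 1 and let n, k, ℓ be natural numbers with n ≤ δ·(k+ℓ). Then (as real numbers) n! ≤ ((2e)^{k+ℓ} · k! · ℓ!)^δ. -/
/-!
Put `m = k + ℓ`. Since `n ≤ δ m ≤ m`, we have `n! ≤ n ^ n ≤ m ^ (δ m) = (m ^ m) ^ δ`, so it is
enough to bound `m ^ m`. Comparing `exp m` with the `m`-th term of its power series gives
`m ^ m ≤ e ^ m * m!`, and bounding the binomial coefficient in `m! = m.choose ℓ * k! * ℓ!` by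
`2 ^ m` accounts for the remaining factor.
-/

open scoped Nat

theorem factorial_add_le_two_pow_mul (k ℓ : ℕ) : (k + ℓ)! ≤ 2 ^ (k + ℓ) * (k ! * ℓ !) :=
  calc (k + ℓ)! = (k + ℓ).choose ℓ * (k ! * ℓ !) := by
        rw [← mul_assoc, Nat.add_choose_mul_factorial_mul_factorial]
    _ ≤ 2 ^ (k + ℓ) * (k ! * ℓ !) := Nat.mul_le_mul_right _ (Nat.choose_le_two_pow _ _)

theorem pow_self_le_exp_one_pow_mul_factorial (m : ℕ) :
    (m : ℝ) ^ m ≤ Real.exp 1 ^ m * m ! := by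
  have term_le_exp : (m : ℝ) ^ m / m ! ≤ Real.exp m :=
    Real.pow_div_factorial_le_exp _ m.cast_nonneg m
  rwa [div_le_iff₀ (by positivity), ← Real.exp_one_pow] at term_le_exp

theorem pow_self_add_le_mul_factorial_mul_factorial (k ℓ : ℕ) :
    ((k + ℓ : ℕ) : ℝ) ^ (k + ℓ) ≤ (2 * Real.exp 1) ^ (k + ℓ) * k ! * ℓ ! :=
  calc ((k + ℓ : ℕ) : ℝ) ^ (k + ℓ) ≤ Real.exp 1 ^ (k + ℓ) * (k + ℓ)! :=
        pow_self_le_exp_one_pow_mul_factorial (k + ℓ)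
    _ ≤ Real.exp 1 ^ (k + ℓ) * (2 ^ (k + ℓ) * (k ! * ℓ !)) := by
        gcongr
        exact_mod_cast factorial_add_le_two_pow_mul k ℓ
    _ = (2 * Real.exp 1) ^ (k + ℓ) * k ! * ℓ ! := by ring

theorem factorial_le_rpow {x y : ℝ} {n : ℕ} (hx : 1 ≤ x) (hnx : n ≤ x) (hny : n ≤ y) :
    (n ! : ℝ) ≤ x ^ y :=
  calc (n ! : ℝ) ≤ (n : ℝ) ^ n := mod_cast n.factorial_le_pow
    _ ≤ x ^ n := by gcongr
    _ = x ^ (n : ℝ) := (Real.rpow_natCast x n).symm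
    _ ≤ x ^ y := Real.rpow_le_rpow_of_exponent_le hx hny

theorem factorial_le_pow_self_rpow {δ : ℝ} {m n : ℕ} (hδ : δ ≤ 1) (hn : n ≤ δ * m) :
    (n ! : ℝ) ≤ ((m : ℝ) ^ m) ^ δ := by
  rcases m.eq_zero_or_pos with rfl | hm
  · have n_eq_zero : n = 0 := by simpa using hn
    simp [n_eq_zero]
  · have n_le_m : (n : ℝ) ≤ m := hn.trans (mul_le_of_le_one_left m.cast_nonneg hδ)
    calc (n ! : ℝ) ≤ (m : ℝ) ^ (m * δ) :=
          factorial_le_rpow (mod_cast hm) n_le_m (by rwa [mul_comm])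
      _ = ((m : ℝ) ^ m) ^ δ := Real.rpow_natCast_mul m.cast_nonneg m δ

/-- For `0 < δ ≤ 1` and `n ≤ δ(k+ℓ)` one has `n! ≤ ((2e)^{k+ℓ} k! ℓ!)^δ` as real numbers. -/
theorem stmt11 (δ : ℝ) (hδ0 : 0 < δ) (hδ1 : δ ≤ 1) (n k ℓ : ℕ)
    (h : (n : ℝ) ≤ δ * (k + ℓ)) :
    (n.factorial : ℝ)
      ≤ ((2 * Real.exp 1) ^ (k + ℓ) * (k.factorial : ℝ) * (ℓ.factorial : ℝ)) ^ δ :=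
  calc (n ! : ℝ) ≤ (((k + ℓ : ℕ) : ℝ) ^ (k + ℓ)) ^ δ :=
        factorial_le_pow_self_rpow hδ1 (mod_cast h)
    _ ≤ ((2 * Real.exp 1) ^ (k + ℓ) * k ! * ℓ !) ^ δ :=
        Real.rpow_le_rpow (by positivity) (pow_self_add_le_mul_factorial_mul_factorial k ℓ) hδ0.le
end

section
/- Let R be a real number with 1/2 ≤ R ≤ 1, let a, b ≥ 0 be real numbers, and let r, s be natural numbers. Then Σ_{n=0}^{min(r,s)} a^n · b^n · ( r! · s! / ((r−n)! · (s−n)! · n!) ) · ((r+s−2n)!)^R / ( (r!)^R · (s!)^R ) ≤ (8·(a+1)·(b+1))^{r+s}. -/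
/-!
Writing `r = p + n` and `s = q + n`, the factor `r! s! / (p! q! n!)` is
`r.choose n * s.choose n * n!`. From `(p + q)! = (p + q).choose q * p! * q!`,
`(p + q).choose q ≤ 2 ^ (p + q)` and `k! * n! ≤ (k + n)!` one gets
`n! ^ 2 * (p + q)! ≤ 2 ^ (p + q) * (r! * s!)`. Taking `R`-th powers, where `R ≥ 1 / 2` gives
`n! ≤ (n! ^ 2) ^ R`, bounds `n! * ((p + q)!) ^ R / (r! * s!) ^ R` by `(2 ^ R) ^ (r + s)`. The
remaining sum of `(a ^ n * r.choose n) * (b ^ n * s.choose n)` is part of the product of the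
binomial expansions of `(a + 1) ^ r` and `(b + 1) ^ s`.
-/

open scoped Nat

section Binomial

variable {K : Type*} [Semiring K]

lemma sum_range_pow_mul_choose (a : K) (r : ℕ) :
    ∑ n ∈ Finset.range (r + 1), a ^ n * (r.choose n : K) = (a + 1) ^ r := by
  simp only [(Commute.one_right a).add_pow, one_pow, mul_one]

variable [PartialOrder K] [IsOrderedRing K]

lemma sum_range_pow_mul_choose_le {a : K} (ha : 0 ≤ a) {m r : ℕ} (hmr : m ≤ r) :
    ∑ n ∈ Finset.range (m + 1), a ^ n * (r.choose n : K) ≤ (a + 1) ^ r := by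
  rw [← sum_range_pow_mul_choose a r]
  exact Finset.sum_le_sum_of_subset_of_nonneg (Finset.range_mono (by lia))
    fun n _ _ ↦ mul_nonneg (pow_nonneg ha n) (Nat.cast_nonneg _)

lemma pow_mul_choose_le {b : K} (hb : 0 ≤ b) {n s : ℕ} (hns : n ≤ s) :
    b ^ n * (s.choose n : K) ≤ (b + 1) ^ s := by
  rw [← sum_range_pow_mul_choose b s]
  exact Finset.single_le_sum (f := fun k ↦ b ^ k * (s.choose k : K))
    (fun k _ ↦ mul_nonneg (pow_nonneg hb k) (Nat.cast_nonneg _)) (Finset.mem_range.2 (by lia))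

lemma sum_range_min_pow_mul_choose_mul_le {a b : K} (ha : 0 ≤ a) (hb : 0 ≤ b) (r s : ℕ) :
    ∑ n ∈ Finset.range (min r s + 1), (a ^ n * (r.choose n : K)) * (b ^ n * (s.choose n : K))
      ≤ (a + 1) ^ r * (b + 1) ^ s := by
  calc ∑ n ∈ Finset.range (min r s + 1), (a ^ n * (r.choose n : K)) * (b ^ n * (s.choose n : K))
      ≤ ∑ n ∈ Finset.range (min r s + 1), (a ^ n * (r.choose n : K)) * (b + 1) ^ s := by
        gcongr with n hn
        exact pow_mul_choose_le hb (by grind)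
    _ = (∑ n ∈ Finset.range (min r s + 1), a ^ n * (r.choose n : K)) * (b + 1) ^ s :=
        (Finset.sum_mul _ _ _).symm
    _ ≤ (a + 1) ^ r * (b + 1) ^ s := by
        gcongr
        · exact pow_nonneg (add_nonneg hb zero_le_one) s
        · exact sum_range_pow_mul_choose_le ha (min_le_left r s)

end Binomial

lemma factorial_mul_factorial_div_eq_choose_mul_choose {K : Type*} [Semifield K] [CharZero K]
    {n r s : ℕ} (hnr : n ≤ r) (hns : n ≤ s) :
    ((r ! : K) * (s ! : K)) / (((r - n)! : K) * ((s - n)! : K) * (n ! : K))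
      = r.choose n * s.choose n * n ! := by
  have hn : (n ! : K) ≠ 0 := Nat.cast_ne_zero.2 n.factorial_ne_zero
  rw [Nat.cast_choose K hnr, Nat.cast_choose K hns]
  field_simp

lemma factorial_mul_factorial_le_factorial_add (m n : ℕ) : m ! * n ! ≤ (m + n)! :=
  Nat.le_of_dvd (Nat.factorial_pos _) (Nat.factorial_mul_factorial_dvd_factorial_add m n)

lemma factorial_sq_mul_factorial_add_le (p q n : ℕ) :
    n ! ^ 2 * (p + q)! ≤ 2 ^ (p + q) * ((p + n)! * (q + n)!) := by
  calc n ! ^ 2 * (p + q)!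
      = (p + q).choose q * ((p ! * n !) * (q ! * n !)) := by
        rw [← Nat.add_choose_mul_factorial_mul_factorial p q]; ring
    _ ≤ 2 ^ (p + q) * ((p + n)! * (q + n)!) := by
        gcongr
        · exact Nat.choose_le_two_pow _ _
        · exact factorial_mul_factorial_le_factorial_add p n
        · exact factorial_mul_factorial_le_factorial_add q n

lemma le_sq_rpow {x R : ℝ} (hx : 1 ≤ x) (hR : 1 / 2 ≤ R) : x ≤ (x ^ 2) ^ R := by
  rw [← Real.rpow_natCast_mul (by positivity)]
  exact Real.self_le_rpow_of_one_le hx (by push_cast; linarith)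

lemma factorial_mul_factorial_add_rpow_le {R : ℝ} (hR : 1 / 2 ≤ R) (p q n : ℕ) :
    (n ! : ℝ) * ((p + q)! : ℝ) ^ R
      ≤ ((2 : ℝ) ^ R) ^ (p + q) * (((p + n)! : ℝ) ^ R * ((q + n)! : ℝ) ^ R) := by
  have hn : (1 : ℝ) ≤ n ! := mod_cast n.factorial_pos
  calc (n ! : ℝ) * ((p + q)! : ℝ) ^ R
      ≤ ((n ! : ℝ) ^ 2) ^ R * ((p + q)! : ℝ) ^ R := by
        gcongr
        exact le_sq_rpow hn hR
    _ = ((n ! : ℝ) ^ 2 * ((p + q)! : ℝ)) ^ R :=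
        (Real.mul_rpow (by positivity) (by positivity)).symm
    _ ≤ ((2 : ℝ) ^ (p + q) * (((p + n)! : ℝ) * ((q + n)! : ℝ))) ^ R := by
        gcongr ?_ ^ R
        exact_mod_cast factorial_sq_mul_factorial_add_le p q n
    _ = ((2 : ℝ) ^ R) ^ (p + q) * (((p + n)! : ℝ) ^ R * ((q + n)! : ℝ) ^ R) := by
        rw [Real.mul_rpow (by positivity) (by positivity),
          Real.mul_rpow (by positivity) (by positivity), Real.rpow_pow_comm (by positivity)]

lemma factorial_mul_factorial_sub_rpow_div_le {R : ℝ} (hR : 1 / 2 ≤ R) {n r s : ℕ}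
    (hnr : n ≤ r) (hns : n ≤ s) :
    (n ! : ℝ) * ((r + s - 2 * n)! : ℝ) ^ R / ((r ! : ℝ) ^ R * (s ! : ℝ) ^ R)
      ≤ ((2 : ℝ) ^ R) ^ (r + s) := by
  obtain ⟨p, rfl⟩ := Nat.exists_eq_add_of_le' hnr
  obtain ⟨q, rfl⟩ := Nat.exists_eq_add_of_le' hns
  have one_le_two_rpow : 1 ≤ (2 : ℝ) ^ R := Real.one_le_rpow one_le_two (by linarith)
  rw [show p + n + (q + n) - 2 * n = p + q by lia, div_le_iff₀ (by positivity)]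
  grw [factorial_mul_factorial_add_rpow_le hR p q n,
    pow_le_pow_right₀ one_le_two_rpow (show p + q ≤ p + n + (q + n) by lia)]

theorem stmt12_general {R : ℝ} (hR : 1 / 2 ≤ R) {a b : ℝ} (ha : 0 ≤ a) (hb : 0 ≤ b) (r s : ℕ) :
    ∑ n ∈ Finset.range (min r s + 1),
      a ^ n * b ^ n
        * ((r ! : ℝ) * (s ! : ℝ) / (((r - n)! : ℝ) * ((s - n)! : ℝ) * (n ! : ℝ)))
        * ((r + s - 2 * n)! : ℝ) ^ R
        / ((r ! : ℝ) ^ R * (s ! : ℝ) ^ R)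
      ≤ (2 ^ R * (a + 1) * (b + 1)) ^ (r + s) := by
  calc
    _ = ∑ n ∈ Finset.range (min r s + 1), (a ^ n * r.choose n) * (b ^ n * s.choose n)
          * (n ! * ((r + s - 2 * n)! : ℝ) ^ R / ((r ! : ℝ) ^ R * (s ! : ℝ) ^ R)) := by
        refine Finset.sum_congr rfl fun n hn ↦ ?_
        rw [factorial_mul_factorial_div_eq_choose_mul_choose (by grind) (by grind)]
        ring
    _ ≤ ∑ n ∈ Finset.range (min r s + 1), (a ^ n * r.choose n) * (b ^ n * s.choose n)
          * ((2 : ℝ) ^ R) ^ (r + s) := by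
        gcongr with n hn
        exact factorial_mul_factorial_sub_rpow_div_le hR (by grind) (by grind)
    _ ≤ ((a + 1) ^ r * (b + 1) ^ s) * ((2 : ℝ) ^ R) ^ (r + s) := by
        rw [← Finset.sum_mul]
        gcongr
        exact sum_range_min_pow_mul_choose_mul_le ha hb r s
    _ ≤ ((a + 1) ^ (r + s) * (b + 1) ^ (r + s)) * ((2 : ℝ) ^ R) ^ (r + s) := by
        gcongr <;> linarith
    _ = (2 ^ R * (a + 1) * (b + 1)) ^ (r + s) := by rw [mul_pow, mul_pow]; ring

/-- The numerical core of the continuity of the Gutt star product in the Weyl algebra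
for `R ≥ 1/2`:
`Σ_{n=0}^{min(r,s)} a^n b^n (r!s!/((r−n)!(s−n)!n!)) ((r+s−2n)!)^R / ((r!)^R (s!)^R)
  ≤ (8(a+1)(b+1))^{r+s}`. -/
theorem stmt12 (R : ℝ) (hR1 : 1 / 2 ≤ R) (hR2 : R ≤ 1) (a b : ℝ) (ha : 0 ≤ a) (hb : 0 ≤ b)
    (r s : ℕ) :
    ∑ n ∈ Finset.range (min r s + 1),
      a ^ n * b ^ n
        * ((r.factorial : ℝ) * (s.factorial : ℝ)
            / (((r - n).factorial : ℝ) * ((s - n).factorial : ℝ) * (n.factorial : ℝ)))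
        * ((r + s - 2 * n).factorial : ℝ) ^ R
        / ((r.factorial : ℝ) ^ R * (s.factorial : ℝ) ^ R)
      ≤ (8 * (a + 1) * (b + 1)) ^ (r + s) := by
  have two_rpow_le : (2 : ℝ) ^ R ≤ 8 :=
    (Real.rpow_le_self_of_one_le one_le_two hR2).trans (by norm_num)
  exact (stmt12_general hR1 ha hb r s).trans (by gcongr)
end

section
/- Let δ be a real number with 0 < δ ≤ 1 and let ℓ, n be natural numbers with ℓ ≤ δ·n. Then (as real numbers) ℓ! ≤ (e^n · n!)^δ. -/
/-!
The geometric mean `(m!)^(1/m)` of `1, …, m` increases with `m`: passing from `m` to `n` adds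
only factors that are at least `m`. Hence `(ℓ!)^n ≤ (n!)^ℓ ≤ (n!)^(δn)`, and taking `n`-th roots
gives `ℓ! ≤ (n!)^δ`, which is the claim without the factor `e^(nδ) ≥ 1`.
-/

open scoped Nat

theorem factorial_pow_le_factorial_pow {m n : ℕ} (hmn : m ≤ n) : m ! ^ n ≤ n ! ^ m :=
  calc m ! ^ n = m ! ^ m * m ! ^ (n - m) := (pow_mul_pow_sub _ hmn).symm
    _ ≤ m ! ^ m * (m ^ m) ^ (n - m) := by gcongr; exact m.factorial_le_pow
    _ = (m ! * m ^ (n - m)) ^ m := by rw [mul_pow, pow_right_comm]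
    _ ≤ n ! ^ m := by gcongr; exact Nat.factorial_mul_pow_sub_le_factorial hmn

theorem stmt14_general {δ : ℝ} (hδ1 : δ ≤ 1) {ℓ n : ℕ} (h : (ℓ : ℝ) ≤ δ * n) :
    (ℓ ! : ℝ) ≤ (n ! : ℝ) ^ δ := by
  have hℓn : ℓ ≤ n := by exact_mod_cast h.trans (mul_le_of_le_one_left n.cast_nonneg hδ1)
  rcases eq_or_ne n 0 with rfl | hn
  · simp [Nat.le_zero.mp hℓn]
  have hpow : (ℓ ! : ℝ) ^ n ≤ ((n ! : ℝ) ^ δ) ^ n :=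
    calc (ℓ ! : ℝ) ^ n ≤ (n ! : ℝ) ^ ℓ := mod_cast factorial_pow_le_factorial_pow hℓn
      _ = (n ! : ℝ) ^ (ℓ : ℝ) := (Real.rpow_natCast _ _).symm
      _ ≤ (n ! : ℝ) ^ (δ * n) :=
        Real.rpow_le_rpow_of_exponent_le (mod_cast n.factorial_pos) h
      _ = ((n ! : ℝ) ^ δ) ^ n := Real.rpow_mul_natCast (Nat.cast_nonneg _) _ _
  exact le_of_pow_le_pow_left₀ hn (by positivity) hpow

/-- For `0 < δ ≤ 1` and `ℓ ≤ δ·n` one has `ℓ! ≤ (e^n · n!)^δ` as real numbers. -/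
theorem stmt14 (δ : ℝ) (hδ0 : 0 < δ) (hδ1 : δ ≤ 1) (ℓ n : ℕ)
    (h : (ℓ : ℝ) ≤ δ * n) :
    (ℓ.factorial : ℝ) ≤ (Real.exp 1 ^ n * (n.factorial : ℝ)) ^ δ :=
  (stmt14_general hδ1 h).trans <| Real.rpow_le_rpow (by positivity)
    (le_mul_of_one_le_left (by positivity) (one_le_pow₀ (Real.one_le_exp zero_le_one))) hδ0.le
end

section
/- Let R ≥ 1 be a real number, z ≥ 0 a real number, and n ≥ 1 a natural number. Then (n!)^R + Σ_{ℓ=1}^{n−1} ((n−ℓ)!)^R · z^ℓ · n^ℓ · C(n+ℓ−2, ℓ−1) ≤ (n!)^R · (8·e·(z+1))^n. -/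
/-!
Since `(n - ℓ)! * n ^ ℓ ≤ n ^ n ≤ n! * e ^ n` and `R ≥ 1`, every summand is at most
`n! ^ R * (e * (|z| + 1)) ^ n` times the binomial coefficient `C(n + ℓ - 2, ℓ - 1)`. By the
hockey-stick identity these coefficients sum to `C(2n - 2, n)`, which costs only a factor `4 ^ n`.
-/

open Finset

theorem rpow_mul_le_rpow_mul_of_mul_le_mul {a b c d R : ℝ} (hR : 1 ≤ R) (ha : 0 ≤ a)
    (hab : a ≤ b) (hd : 0 ≤ d) (h : a * c ≤ b * d) : a ^ R * c ≤ b ^ R * d := by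
  have hb : 0 ≤ b := ha.trans hab
  have rpow_eq {x : ℝ} (hx : 0 ≤ x) : x ^ R = x ^ (R - 1) * x := by
    rw [← Real.rpow_add_one' hx (by linarith), sub_add_cancel]
  calc a ^ R * c = a ^ (R - 1) * (a * c) := by rw [rpow_eq ha, mul_assoc]
    _ ≤ a ^ (R - 1) * (b * d) := by gcongr
    _ ≤ b ^ (R - 1) * (b * d) := by gcongr
    _ = b ^ R * d := by rw [rpow_eq hb, mul_assoc]

theorem pow_self_le_factorial_mul_exp_one_pow (n : ℕ) :
    (n : ℝ) ^ n ≤ n.factorial * Real.exp 1 ^ n := by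
  rw [← Real.exp_nat_mul, mul_one, ← div_le_iff₀' (by positivity)]
  exact Real.pow_div_factorial_le_exp n n.cast_nonneg n

theorem factorial_sub_mul_pow_le_pow_self {n k : ℕ} (hk : k ≤ n) :
    (n - k).factorial * n ^ k ≤ n ^ n :=
  calc (n - k).factorial * n ^ k ≤ n ^ (n - k) * n ^ k := by
        gcongr
        exact (Nat.factorial_le_pow _).trans (Nat.pow_le_pow_left (Nat.sub_le n k) _)
    _ = n ^ n := by rw [← pow_add, Nat.sub_add_cancel hk]

theorem factorial_sub_rpow_mul_pow_le {R : ℝ} (hR : 1 ≤ R) {n k : ℕ} (hk : k ≤ n) :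
    ((n - k).factorial : ℝ) ^ R * (n : ℝ) ^ k ≤ (n.factorial : ℝ) ^ R * Real.exp 1 ^ n := by
  have factorial_le : ((n - k).factorial : ℝ) ≤ n.factorial :=
    mod_cast Nat.factorial_le (Nat.sub_le n k)
  have mul_pow_le : ((n - k).factorial : ℝ) * (n : ℝ) ^ k ≤ (n : ℝ) ^ n :=
    mod_cast factorial_sub_mul_pow_le_pow_self hk
  exact rpow_mul_le_rpow_mul_of_mul_le_mul hR (by positivity) factorial_le (by positivity)
    (mul_pow_le.trans (pow_self_le_factorial_mul_exp_one_pow n))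

theorem pow_le_abs_add_one_pow {α : Type*} [Ring α] [LinearOrder α] [IsOrderedRing α] (z : α)
    {k n : ℕ} (hk : k ≤ n) : z ^ k ≤ (|z| + 1) ^ n :=
  calc z ^ k ≤ |z| ^ k := (le_abs_self _).trans_eq (abs_pow z k)
    _ ≤ (|z| + 1) ^ k := by gcongr; exact le_add_of_nonneg_right zero_le_one
    _ ≤ (|z| + 1) ^ n := pow_le_pow_right₀ (le_add_of_nonneg_left (abs_nonneg z)) hk

theorem sum_range_choose_add_self (n m : ℕ) :
    ∑ i ∈ range m, (n + i).choose i = (n + m).choose (n + 1) := by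
  cases m with
  | zero => simp
  | succ m =>
    calc ∑ i ∈ range (m + 1), (n + i).choose i = ∑ i ∈ range (m + 1), (i + n).choose n :=
          sum_congr rfl fun i _ ↦ by rw [add_comm n i, Nat.choose_symm_add]
      _ = (n + (m + 1)).choose (n + 1) := by
          rw [Nat.sum_range_add_choose, add_comm m n, add_assoc]

theorem one_add_sum_choose_le_four_pow (n : ℕ) :
    1 + ∑ ℓ ∈ Icc 1 (n - 1), (n + ℓ - 2).choose (ℓ - 1) ≤ 4 ^ n := by
  cases n with
  | zero => simp
  | succ m =>
    have sum_eq : ∑ ℓ ∈ Icc 1 m, (m + 1 + ℓ - 2).choose (ℓ - 1) = (m + m).choose (m + 1) := by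
      rw [← sum_range_choose_add_self, ← Ico_add_one_right_eq_Icc, sum_Ico_eq_sum_range,
        Nat.add_sub_cancel]
      refine sum_congr rfl fun i _ ↦ ?_
      congr 1 <;> lia
    have choose_le : (m + m).choose (m + 1) ≤ 4 ^ m :=
      calc (m + m).choose (m + 1) ≤ 2 ^ (m + m) := Nat.choose_le_two_pow _ _
        _ = 4 ^ m := by rw [← two_mul, pow_mul]; norm_num
    calc 1 + ∑ ℓ ∈ Icc 1 m, (m + 1 + ℓ - 2).choose (ℓ - 1) ≤ 4 ^ m + 4 ^ m := by
          rw [sum_eq]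
          exact add_le_add (Nat.one_le_pow m 4 (by norm_num)) choose_le
      _ ≤ 4 ^ (m + 1) := by lia

theorem stmt16_general {R : ℝ} (hR : 1 ≤ R) (z : ℝ) (n : ℕ) :
    (n.factorial : ℝ) ^ R
      + ∑ ℓ ∈ Icc 1 (n - 1),
          ((n - ℓ).factorial : ℝ) ^ R * z ^ ℓ * (n : ℝ) ^ ℓ
            * ((n + ℓ - 2).choose (ℓ - 1) : ℝ)
      ≤ (n.factorial : ℝ) ^ R * (4 * Real.exp 1 * (|z| + 1)) ^ n := by
  set M : ℝ := (n.factorial : ℝ) ^ R * Real.exp 1 ^ n * (|z| + 1) ^ n with hM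
  have weight_le {ℓ : ℕ} (hℓ : ℓ ≤ n) :
      ((n - ℓ).factorial : ℝ) ^ R * z ^ ℓ * (n : ℝ) ^ ℓ ≤ M := by
    rw [mul_right_comm]
    exact mul_le_mul_of_nonneg (factorial_sub_rpow_mul_pow_le hR hℓ)
      (pow_le_abs_add_one_pow z hℓ) (by positivity) (by positivity)
  have count_le : 1 + ∑ ℓ ∈ Icc 1 (n - 1), ((n + ℓ - 2).choose (ℓ - 1) : ℝ) ≤ 4 ^ n :=
    mod_cast one_add_sum_choose_le_four_pow n
  calc _ ≤ M + ∑ ℓ ∈ Icc 1 (n - 1), M * ((n + ℓ - 2).choose (ℓ - 1) : ℝ) := by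
        gcongr with ℓ hℓ
        · simpa using weight_le (Nat.zero_le n)
        · exact weight_le ((mem_Icc.mp hℓ).2.trans (Nat.sub_le n 1))
    _ = M * (1 + ∑ ℓ ∈ Icc 1 (n - 1), ((n + ℓ - 2).choose (ℓ - 1) : ℝ)) := by
        rw [← mul_sum, mul_one_add]
    _ ≤ M * 4 ^ n := by gcongr
    _ = (n.factorial : ℝ) ^ R * (4 * Real.exp 1 * (|z| + 1)) ^ n := by
        rw [hM, mul_pow, mul_pow]; ring

/-- The numerical core of the estimate
`p_R(ξ₁ ⋆_z ⋯ ⋆_z ξₙ) ≤ (8e(|z|+1))^n n!^R q(ξ₁)⋯q(ξₙ)`: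
for `R ≥ 1`, `z ≥ 0` and `n ≥ 1`,
`(n!)^R + Σ_{ℓ=1}^{n−1} ((n−ℓ)!)^R z^ℓ n^ℓ C(n+ℓ−2, ℓ−1) ≤ (n!)^R (8e(z+1))^n`. -/
theorem stmt16 (R : ℝ) (hR : 1 ≤ R) (z : ℝ) (hz : 0 ≤ z) (n : ℕ) (hn : 1 ≤ n) :
    (n.factorial : ℝ) ^ R
      + ∑ ℓ ∈ Finset.Icc 1 (n - 1),
          ((n - ℓ).factorial : ℝ) ^ R * z ^ ℓ * (n : ℝ) ^ ℓ
            * ((n + ℓ - 2).choose (ℓ - 1) : ℝ)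
      ≤ (n.factorial : ℝ) ^ R * (8 * Real.exp 1 * (z + 1)) ^ n := by
  refine (stmt16_general hR z n).trans ?_
  rw [abs_of_nonneg hz]
  gcongr
  norm_num
end
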